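/- arXiv:math/0602607 — 3 statements merged into one kernel-verified Lean document; each statement's English description precedes it below -/
import Mathlib

section
/- Let A = (A_1,A_2,A_3,A_4) be a connection on ℝ⁴ (smooth anti-Hermitian matrix-valued maps). Then the anti-self-dual Yang–Mills equations with respect to the Euclidean metric, namely F_{12} = −F_{34}, F_{13} = −F_{42}, F_{14} = −F_{23} everywhere on ℝ⁴, hold if and only if for every μ ∈ ℂ∖{0} the operators ∇_w̄ + μ∇_z and ∇_w − μ⁻¹∇_z̄ commute, i.e. (∇_w̄ + μ∇_z)((∇_w − μ⁻¹∇_z̄)E) = (∇_w − μ⁻¹∇_z̄)((∇_w̄ + μ∇_z)E) for every smooth map E : ℝ⁴ → M_n(ℂ). -/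
open Matrix Complex
open scoped Matrix ComplexConjugate

attribute [local instance] Matrix.normedAddCommGroup Matrix.normedSpace

noncomputable section

/-- `n × n` complex matrices. -/
abbrev Mat (n : ℕ) := Matrix (Fin n) (Fin n) ℂ

/-- `ℝ⁴` with coordinates `(x₁, x₂, x₃, x₄)`. -/
abbrev P4 : Type := ℝ × ℝ × ℝ × ℝ

/-- Partial derivative in `x₁`. -/
def pd1 {n : ℕ} (f : P4 → Mat n) (p : P4) : Mat n :=
  deriv (fun s => f (s, p.2.1, p.2.2.1, p.2.2.2)) p.1

/-- Partial derivative in `x₂`. -/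
def pd2 {n : ℕ} (f : P4 → Mat n) (p : P4) : Mat n :=
  deriv (fun s => f (p.1, s, p.2.2.1, p.2.2.2)) p.2.1

/-- Partial derivative in `x₃`. -/
def pd3 {n : ℕ} (f : P4 → Mat n) (p : P4) : Mat n :=
  deriv (fun s => f (p.1, p.2.1, s, p.2.2.2)) p.2.2.1

/-- Partial derivative in `x₄`. -/
def pd4 {n : ℕ} (f : P4 → Mat n) (p : P4) : Mat n :=
  deriv (fun s => f (p.1, p.2.1, p.2.2.1, s)) p.2.2.2

/-- Covariant derivative `∇E = ∂E − A·E` in the direction corresponding to `pd`. -/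
def nab {n : ℕ} (pd : (P4 → Mat n) → P4 → Mat n) (A : P4 → Mat n)
    (E : P4 → Mat n) (p : P4) : Mat n :=
  pd E p - A p * E p

/-- Curvature component `F_{ij} = −∂_{x_i}A_j + ∂_{x_j}A_i + [A_i, A_j]`. -/
def curv {n : ℕ} (pdi pdj : (P4 → Mat n) → P4 → Mat n) (Ai Aj : P4 → Mat n)
    (p : P4) : Mat n :=
  -(pdi Aj p) + pdj Ai p + (Ai p * Aj p - Aj p * Ai p)

/-- `∇_z = ½(∇₁ − i∇₂)`. -/
def nabz {n : ℕ} (A1 A2 E : P4 → Mat n) (p : P4) : Mat n :=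
  (2⁻¹ : ℂ) • (nab pd1 A1 E p - Complex.I • nab pd2 A2 E p)

/-- `∇_z̄ = ½(∇₁ + i∇₂)`. -/
def nabzbar {n : ℕ} (A1 A2 E : P4 → Mat n) (p : P4) : Mat n :=
  (2⁻¹ : ℂ) • (nab pd1 A1 E p + Complex.I • nab pd2 A2 E p)

/-- `∇_w = ½(∇₃ − i∇₄)`. -/
def nabw {n : ℕ} (A3 A4 E : P4 → Mat n) (p : P4) : Mat n :=
  (2⁻¹ : ℂ) • (nab pd3 A3 E p - Complex.I • nab pd4 A4 E p)

/-- `∇_w̄ = ½(∇₃ + i∇₄)`. -/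
def nabwbar {n : ℕ} (A3 A4 E : P4 → Mat n) (p : P4) : Mat n :=
  (2⁻¹ : ℂ) • (nab pd3 A3 E p + Complex.I • nab pd4 A4 E p)

/-- The operator `∇_w̄ + μ∇_z`. -/
def DOne {n : ℕ} (A1 A2 A3 A4 : P4 → Mat n) (μ : ℂ) (E : P4 → Mat n) : P4 → Mat n :=
  fun p => nabwbar A3 A4 E p + μ • nabz A1 A2 E p

/-- The operator `∇_w − μ⁻¹∇_z̄` (Euclidean signature). -/
def DTwoEucl {n : ℕ} (A1 A2 A3 A4 : P4 → Mat n) (μ : ℂ) (E : P4 → Mat n) : P4 → Mat n :=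
  fun p => nabw A3 A4 E p - μ⁻¹ • nabzbar A1 A2 E p

/-!
The operators of the Lax pair are combinations `∑ i, cᵢ ∇ᵢ` with constant complex coefficients, and
`[∇ᵢ, ∇ⱼ]` is multiplication by `Fᵢⱼ`, so their commutator is multiplication by
`∑ i j, cᵢ dⱼ Fᵢⱼ`. For the coefficients at hand this is a Laurent polynomial in `μ` with terms of
degrees `-1`, `0`, `1`, whose coefficients span the self-dual part of the curvature. It vanishes for
every `μ ≠ 0` iff its coefficients do, and testing on `E = 1` recovers it from the commutator.
-/

lemma add_smul_add_inv_smul_eq_zero_iff {K V : Type*} [Field K] [CharZero K] [AddCommGroup V]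
    [Module K V] {a b c : V} :
    (∀ μ : K, μ ≠ 0 → a + μ • b + μ⁻¹ • c = 0) ↔ a = 0 ∧ b = 0 ∧ c = 0 := by
  refine ⟨fun h => ?_, by rintro ⟨rfl, rfl, rfl⟩; simp⟩
  have at_one := h 1 one_ne_zero
  have at_neg_one := h (-1) (by simp)
  have at_two := h 2 two_ne_zero
  refine ⟨?_, ?_, ?_⟩
  · linear_combination (norm := module) (1 / 2 : K) • at_one + (1 / 2 : K) • at_neg_one
  · linear_combination (norm := module)
      (2 / 3 : K) • at_two - (1 / 2 : K) • at_one - (1 / 6 : K) • at_neg_one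
  · linear_combination (norm := module)
      at_one - (2 / 3 : K) • at_two - (1 / 3 : K) • at_neg_one

lemma sub_I_smul_add_I_smul_eq_zero_iff {V : Type*} [AddCommGroup V] [Module ℂ V] {x y : V} :
    x - I • y = 0 ∧ x + I • y = 0 ↔ x = 0 ∧ y = 0 := by
  refine ⟨fun ⟨hsub, hadd⟩ => ?_, by rintro ⟨rfl, rfl⟩; simp⟩
  have hx : x = 0 := by
    linear_combination (norm := module) (1 / 2 : ℂ) • hsub + (1 / 2 : ℂ) • hadd
  simpa [hx] using hadd

section LineDeriv

variable {𝕜 X V : Type*} [NontriviallyNormedField 𝕜] [NormedAddCommGroup X] [NormedSpace 𝕜 X]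
  [NormedAddCommGroup V] [NormedSpace 𝕜 V]

lemma deriv_comp_eq_lineDeriv {X : Type*} [AddCommGroup X] [Module 𝕜 X] (f : X → V) {γ : 𝕜 → X}
    {s : 𝕜} {v : X} (hγ : ∀ t, γ (s + t) = γ s + t • v) :
    deriv (fun t => f (γ t)) s = lineDeriv 𝕜 f (γ s) v := by
  simp only [lineDeriv, ← hγ, deriv_comp_const_add (fun t => f (γ t)), add_zero]

lemma hasLineDerivAt_lineDeriv {f : X → V} {x : X} (hf : ContDiffAt 𝕜 2 f x) (u v : X) :
    HasLineDerivAt 𝕜 (fun y => lineDeriv 𝕜 f y v) (fderiv 𝕜 (fderiv 𝕜 f) x u v) x u := by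
  have lineDeriv_eq : (fun y => lineDeriv 𝕜 f y v) =ᶠ[nhds x] fun y => fderiv 𝕜 f y v :=
    (hf.eventually (by simp)).mono fun y hy =>
      (hy.differentiableAt two_ne_zero).lineDeriv_eq_fderiv
  have hasFDerivAt_fderiv : HasFDerivAt (fderiv 𝕜 f) (fderiv 𝕜 (fderiv 𝕜 f) x) x :=
    ((hf.fderiv_right (m := 1) (by norm_num)).differentiableAt one_ne_zero).hasFDerivAt
  refine HasLineDerivAt.congr_of_eventuallyEq ?_ lineDeriv_eq
  simpa using (hasFDerivAt_fderiv.clm_apply (hasFDerivAt_const v x)).hasLineDerivAt u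

lemma lineDeriv_lineDeriv_comm {𝕜 X V : Type*} [RCLike 𝕜] [NormedAddCommGroup X] [NormedSpace 𝕜 X]
    [NormedAddCommGroup V] [NormedSpace 𝕜 V] {f : X → V} {x : X} (hf : ContDiffAt 𝕜 2 f x)
    (u v : X) :
    lineDeriv 𝕜 (fun y => lineDeriv 𝕜 f y v) x u =
      lineDeriv 𝕜 (fun y => lineDeriv 𝕜 f y u) x v := by
  rw [(hasLineDerivAt_lineDeriv hf u v).lineDeriv, (hasLineDerivAt_lineDeriv hf v u).lineDeriv]
  exact hf.isSymmSndFDerivAt (by simp) u v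

lemma hasDerivAt_matrix_mul {𝔸 l m n : Type*} [Finite l] [Fintype m] [Finite n] [NormedRing 𝔸]
    [NormedAlgebra 𝕜 𝔸] {f : 𝕜 → Matrix l m 𝔸} {g : 𝕜 → Matrix m n 𝔸} {f' : Matrix l m 𝔸}
    {g' : Matrix m n 𝔸} {t : 𝕜} (hf : HasDerivAt f f' t) (hg : HasDerivAt g g' t) :
    HasDerivAt (fun s => f s * g s) (f' * g t + f t * g') t := by
  have := Fintype.ofFinite l
  have := Fintype.ofFinite n
  refine hasDerivAt_pi.2 fun i => hasDerivAt_pi.2 fun j => ?_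
  have entry := HasDerivAt.fun_sum (u := Finset.univ) fun k _ =>
    (hasDerivAt_pi.1 (hasDerivAt_pi.1 hf i) k).mul (hasDerivAt_pi.1 (hasDerivAt_pi.1 hg k) j)
  simpa [Matrix.mul_apply, Finset.sum_add_distrib] using entry

end LineDeriv

section CovariantDerivative

variable {n : ℕ} {A B E : P4 → Mat n} {p u v : P4}

/-- The derivative along a constant vector field `v` of `ℝ⁴`, as an operator that can be fed to
`nab` and `curv`; it uses `lineDeriv` so that it extends `pd1`, …, `pd4` also to functions that are
not differentiable. -/
def dirDeriv (v : P4) (f : P4 → Mat n) (p : P4) : Mat n :=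
  lineDeriv ℝ f p v

lemma pd1_eq_dirDeriv : @pd1 n = dirDeriv (1, 0, 0, 0) := by
  funext f p
  exact deriv_comp_eq_lineDeriv f (γ := fun s => (s, p.2.1, p.2.2.1, p.2.2.2))
    fun t => by ext <;> simp

lemma pd2_eq_dirDeriv : @pd2 n = dirDeriv (0, 1, 0, 0) := by
  funext f p
  exact deriv_comp_eq_lineDeriv f (γ := fun s => (p.1, s, p.2.2.1, p.2.2.2))
    fun t => by ext <;> simp

lemma pd3_eq_dirDeriv : @pd3 n = dirDeriv (0, 0, 1, 0) := by
  funext f p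
  exact deriv_comp_eq_lineDeriv f (γ := fun s => (p.1, p.2.1, s, p.2.2.2))
    fun t => by ext <;> simp

lemma pd4_eq_dirDeriv : @pd4 n = dirDeriv (0, 0, 0, 1) := by
  funext f p
  exact deriv_comp_eq_lineDeriv f (γ := fun s => (p.1, p.2.1, p.2.2.1, s))
    fun t => by ext <;> simp

lemma curv_self (pd : (P4 → Mat n) → P4 → Mat n) (A : P4 → Mat n) (p : P4) :
    curv pd pd A A p = 0 := by
  simp [curv]

lemma curv_swap (pd pd' : (P4 → Mat n) → P4 → Mat n) (A B : P4 → Mat n) (p : P4) :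
    curv pd pd' A B p = -curv pd' pd B A p := by
  simp only [curv]
  abel

lemma hasLineDerivAt_nab_dirDeriv (hA : LineDifferentiableAt ℝ A p u) (hE : ContDiffAt ℝ 2 E p) :
    HasLineDerivAt ℝ (nab (dirDeriv v) A E)
      (dirDeriv u (dirDeriv v E) p - (dirDeriv u A p * E p + A p * dirDeriv u E p)) p u := by
  have hasLineDerivAt_dirDeriv :
      HasLineDerivAt ℝ (dirDeriv v E) (dirDeriv u (dirDeriv v E) p) p u :=
    (hasLineDerivAt_lineDeriv hE u v).lineDifferentiableAt.hasLineDerivAt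
  have hasLineDerivAt_E : HasLineDerivAt ℝ E (dirDeriv u E p) p u :=
    (hE.differentiableAt two_ne_zero).lineDifferentiableAt.hasLineDerivAt
  have product_rule := hasDerivAt_matrix_mul hA.hasLineDerivAt hasLineDerivAt_E
  simp only [zero_smul, add_zero] at product_rule
  exact hasLineDerivAt_dirDeriv.sub product_rule

lemma nab_nab_sub_nab_nab (hA : LineDifferentiableAt ℝ A p v) (hB : LineDifferentiableAt ℝ B p u)
    (hE : ContDiffAt ℝ 2 E p) :
    nab (dirDeriv u) A (nab (dirDeriv v) B E) p - nab (dirDeriv v) B (nab (dirDeriv u) A E) p =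
      curv (dirDeriv u) (dirDeriv v) A B p * E p := by
  have deriv_nab_v : dirDeriv u (nab (dirDeriv v) B E) p =
      dirDeriv u (dirDeriv v E) p - (dirDeriv u B p * E p + B p * dirDeriv u E p) :=
    (hasLineDerivAt_nab_dirDeriv hB hE).lineDeriv
  have deriv_nab_u : dirDeriv v (nab (dirDeriv u) A E) p =
      dirDeriv v (dirDeriv u E) p - (dirDeriv v A p * E p + A p * dirDeriv v E p) :=
    (hasLineDerivAt_nab_dirDeriv hA hE).lineDeriv
  have symmetry : dirDeriv u (dirDeriv v E) p = dirDeriv v (dirDeriv u E) p :=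
    lineDeriv_lineDeriv_comm hE u v
  rw [nab, nab.eq_def (dirDeriv v) B (nab _ _ _), deriv_nab_v, deriv_nab_u, symmetry, curv,
    nab, nab]
  noncomm_ring

lemma nab_sum_smul {ι : Type*} {s : Finset ι} (c : ι → ℂ) {f : ι → P4 → Mat n}
    (hf : ∀ i ∈ s, LineDifferentiableAt ℝ (f i) p v) :
    nab (dirDeriv v) A (fun q => ∑ i ∈ s, c i • f i q) p =
      ∑ i ∈ s, c i • nab (dirDeriv v) A (f i) p := by
  have deriv_sum : dirDeriv v (fun q => ∑ i ∈ s, c i • f i q) p =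
      ∑ i ∈ s, c i • dirDeriv v (f i) p :=
    (HasDerivAt.fun_sum fun i hi => (hf i hi).hasLineDerivAt.const_smul (c i)).deriv
  simp only [nab, deriv_sum, Finset.mul_sum, mul_smul_comm, smul_sub, Finset.sum_sub_distrib]

end CovariantDerivative

section ComplexCombination

variable {n : ℕ} {ι : Type*} [Fintype ι]

/-- The operator `∑ i, cᵢ ∇ᵢ`, where `∇ᵢ` is the covariant derivative along `vᵢ` with connection
coefficient `Aᵢ`: the covariant derivative along the complex vector `∑ i, cᵢ vᵢ`. -/
def nabComb (v : ι → P4) (A : ι → P4 → Mat n) (c : ι → ℂ) (E : P4 → Mat n) (p : P4) : Mat n :=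
  ∑ i, c i • nab (dirDeriv (v i)) (A i) E p

variable {v : ι → P4} {A : ι → P4 → Mat n} {E : P4 → Mat n} {p : P4}

lemma nabComb_nabComb (hA : ∀ i, DifferentiableAt ℝ (A i) p) (hE : ContDiffAt ℝ 2 E p)
    (c d : ι → ℂ) :
    nabComb v A c (nabComb v A d E) p =
      ∑ i, ∑ j, (c i * d j) •
        nab (dirDeriv (v i)) (A i) (nab (dirDeriv (v j)) (A j) E) p := by
  refine Finset.sum_congr rfl fun i _ => ?_
  have nab_nabComb : nab (dirDeriv (v i)) (A i) (nabComb v A d E) p =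
      ∑ j, d j • nab (dirDeriv (v i)) (A i) (nab (dirDeriv (v j)) (A j) E) p :=
    nab_sum_smul d fun j _ =>
      (hasLineDerivAt_nab_dirDeriv (hA j).lineDifferentiableAt hE).lineDifferentiableAt
  simp only [nab_nabComb, Finset.smul_sum, mul_smul]

lemma nabComb_nabComb_sub_nabComb_nabComb (hA : ∀ i, DifferentiableAt ℝ (A i) p)
    (hE : ContDiffAt ℝ 2 E p) (c d : ι → ℂ) :
    nabComb v A c (nabComb v A d E) p - nabComb v A d (nabComb v A c E) p =
      (∑ i, ∑ j, (c i * d j) • curv (dirDeriv (v i)) (dirDeriv (v j)) (A i) (A j) p) * E p := by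
  rw [nabComb_nabComb hA hE, nabComb_nabComb hA hE,
    Finset.sum_comm (f := fun i j => (d i * c j) • _)]
  simp only [mul_comm (d _), ← Finset.sum_sub_distrib, ← smul_sub, Finset.sum_mul, smul_mul_assoc,
    nab_nab_sub_nab_nab (hA _).lineDifferentiableAt (hA _).lineDifferentiableAt hE]

end ComplexCombination

section LaxPair

variable {n : ℕ} {A1 A2 A3 A4 : P4 → Mat n} {p : P4}

/-- The coordinate vector fields of `ℝ⁴`. -/
def coordFrame : Fin 4 → P4 :=
  ![(1, 0, 0, 0), (0, 1, 0, 0), (0, 0, 1, 0), (0, 0, 0, 1)]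

/-- The curvature of the Lax pair, that is, the matrix by which the commutator of `∇_w̄ + μ∇_z` and
`∇_w − μ⁻¹∇_z̄` multiplies; it is written as a Laurent polynomial in the spectral parameter `μ` to
exhibit its dependence on the self-dual part of the curvature. -/
def laxCurv (A1 A2 A3 A4 : P4 → Mat n) (μ : ℂ) (p : P4) : Mat n :=
  (4⁻¹ : ℂ) • ((-2 * I) • (curv pd1 pd2 A1 A2 p + curv pd3 pd4 A3 A4 p) +
    μ • ((curv pd1 pd3 A1 A3 p + curv pd4 pd2 A4 A2 p) -
      I • (curv pd1 pd4 A1 A4 p + curv pd2 pd3 A2 A3 p)) +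
    μ⁻¹ • ((curv pd1 pd3 A1 A3 p + curv pd4 pd2 A4 A2 p) +
      I • (curv pd1 pd4 A1 A4 p + curv pd2 pd3 A2 A3 p)))

/-- The coefficients of `∇_w̄ + μ∇_z` with respect to `∇₁`, …, `∇₄`. -/
def dOneCoeff (μ : ℂ) : Fin 4 → ℂ :=
  ![2⁻¹ * μ, -(2⁻¹ * μ * I), 2⁻¹, 2⁻¹ * I]

/-- The coefficients of `∇_w − μ⁻¹∇_z̄` with respect to `∇₁`, …, `∇₄`. -/
def dTwoCoeff (μ : ℂ) : Fin 4 → ℂ :=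
  ![-(2⁻¹ * μ⁻¹), -(2⁻¹ * μ⁻¹ * I), 2⁻¹, -(2⁻¹ * I)]

lemma DOne_eq_nabComb (A1 A2 A3 A4 : P4 → Mat n) (μ : ℂ) :
    DOne A1 A2 A3 A4 μ = nabComb coordFrame ![A1, A2, A3, A4] (dOneCoeff μ) := by
  funext E p
  simp only [DOne, nabwbar, nabz, nabComb, coordFrame, dOneCoeff, Fin.sum_univ_four,
    pd1_eq_dirDeriv, pd2_eq_dirDeriv, pd3_eq_dirDeriv, pd4_eq_dirDeriv, Matrix.cons_val]
  module

lemma DTwoEucl_eq_nabComb (A1 A2 A3 A4 : P4 → Mat n) (μ : ℂ) :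
    DTwoEucl A1 A2 A3 A4 μ = nabComb coordFrame ![A1, A2, A3, A4] (dTwoCoeff μ) := by
  funext E p
  simp only [DTwoEucl, nabw, nabzbar, nabComb, coordFrame, dTwoCoeff, Fin.sum_univ_four,
    pd1_eq_dirDeriv, pd2_eq_dirDeriv, pd3_eq_dirDeriv, pd4_eq_dirDeriv, Matrix.cons_val]
  module

lemma sum_dOneCoeff_mul_dTwoCoeff_smul_curv {μ : ℂ} (hμ : μ ≠ 0) (A1 A2 A3 A4 : P4 → Mat n)
    (p : P4) :
    ∑ i, ∑ j, (dOneCoeff μ i * dTwoCoeff μ j) •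
        curv (dirDeriv (coordFrame i)) (dirDeriv (coordFrame j))
          (![A1, A2, A3, A4] i) (![A1, A2, A3, A4] j) p =
      laxCurv A1 A2 A3 A4 μ p := by
  have hI : I * I = -1 := I_mul_I
  have hμ_inv : μ * μ⁻¹ = 1 := mul_inv_cancel₀ hμ
  simp only [laxCurv, coordFrame, dOneCoeff, dTwoCoeff, Fin.sum_univ_four, pd1_eq_dirDeriv,
    pd2_eq_dirDeriv, pd3_eq_dirDeriv, pd4_eq_dirDeriv, curv_self, Matrix.cons_val]
  rw [curv_swap _ _ A2 A1, curv_swap _ _ A3 A1, curv_swap _ _ A4 A1, curv_swap _ _ A3 A2,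
    curv_swap _ _ A2 A4, curv_swap _ _ A4 A3]
  match_scalars <;> grind

lemma DOne_DTwoEucl_sub_DTwoEucl_DOne {E : P4 → Mat n} {μ : ℂ} (hμ : μ ≠ 0)
    (h1 : DifferentiableAt ℝ A1 p) (h2 : DifferentiableAt ℝ A2 p)
    (h3 : DifferentiableAt ℝ A3 p) (h4 : DifferentiableAt ℝ A4 p) (hE : ContDiffAt ℝ 2 E p) :
    DOne A1 A2 A3 A4 μ (DTwoEucl A1 A2 A3 A4 μ E) p -
        DTwoEucl A1 A2 A3 A4 μ (DOne A1 A2 A3 A4 μ E) p =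
      laxCurv A1 A2 A3 A4 μ p * E p := by
  have hA : ∀ i, DifferentiableAt ℝ (![A1, A2, A3, A4] i) p := by
    simp [Fin.forall_fin_succ, h1, h2, h3, h4]
  rw [DOne_eq_nabComb, DTwoEucl_eq_nabComb, nabComb_nabComb_sub_nabComb_nabComb hA hE,
    sum_dOneCoeff_mul_dTwoCoeff_smul_curv hμ]

lemma laxCurv_eq_zero_iff :
    (∀ μ : ℂ, μ ≠ 0 → laxCurv A1 A2 A3 A4 μ p = 0) ↔
      curv pd1 pd2 A1 A2 p = -curv pd3 pd4 A3 A4 p ∧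
        curv pd1 pd3 A1 A3 p = -curv pd4 pd2 A4 A2 p ∧
        curv pd1 pd4 A1 A4 p = -curv pd2 pd3 A2 A3 p := by
  have neg_two_mul_I_ne_zero : -2 * I ≠ 0 := by simp
  have four_inv_ne_zero : (4⁻¹ : ℂ) ≠ 0 := by norm_num
  simp only [laxCurv, smul_eq_zero_iff_right four_inv_ne_zero, add_smul_add_inv_smul_eq_zero_iff,
    smul_eq_zero_iff_right neg_two_mul_I_ne_zero, sub_I_smul_add_I_smul_eq_zero_iff,
    eq_neg_iff_add_eq_zero]

end LaxPair

theorem asdym_euclidean_lax_general {n : ℕ} {k : WithTop ℕ∞} (hk : 2 ≤ k) (A1 A2 A3 A4 : P4 → Mat n)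
    (h1 : Differentiable ℝ A1) (h2 : Differentiable ℝ A2)
    (h3 : Differentiable ℝ A3) (h4 : Differentiable ℝ A4) :
    (∀ p : P4,
        curv pd1 pd2 A1 A2 p = -(curv pd3 pd4 A3 A4 p) ∧
        curv pd1 pd3 A1 A3 p = -(curv pd4 pd2 A4 A2 p) ∧
        curv pd1 pd4 A1 A4 p = -(curv pd2 pd3 A2 A3 p)) ↔
      (∀ μ : ℂ, μ ≠ 0 → ∀ E : P4 → Mat n, ContDiff ℝ k E → ∀ p : P4,
        DOne A1 A2 A3 A4 μ (DTwoEucl A1 A2 A3 A4 μ E) p =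
          DTwoEucl A1 A2 A3 A4 μ (DOne A1 A2 A3 A4 μ E) p) := by
  have commutator {μ : ℂ} (hμ : μ ≠ 0) {E : P4 → Mat n} (hE : ContDiff ℝ k E) (p : P4) :=
    DOne_DTwoEucl_sub_DTwoEucl_DOne hμ (h1 p) (h2 p) (h3 p) (h4 p) (hE.of_le hk).contDiffAt
  simp only [← laxCurv_eq_zero_iff]
  constructor
  · intro laxCurv_zero μ hμ E hE p
    rw [← sub_eq_zero, commutator hμ hE, laxCurv_zero p μ hμ, zero_mul]
  · intro commute p μ hμ
    have commutator_one := commutator hμ (E := fun _ => 1) contDiff_const p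
    rwa [commute μ hμ _ contDiff_const p, sub_self, mul_one, eq_comm] at commutator_one

/-- The anti-self-dual Yang–Mills equations on Euclidean `ℝ⁴`,
`F₁₂ = −F₃₄`, `F₁₃ = −F₄₂`, `F₁₄ = −F₂₃`, hold iff for every `μ ∈ ℂ∖{0}` the operators
`∇_w̄ + μ∇_z` and `∇_w − μ⁻¹∇_z̄` commute on all smooth maps `E : ℝ⁴ → Mₙ(ℂ)`. -/
theorem asdym_euclidean_lax {n : ℕ} (A1 A2 A3 A4 : P4 → Mat n)
    (h1s : ContDiff ℝ (⊤ : ℕ∞) A1) (h2s : ContDiff ℝ (⊤ : ℕ∞) A2)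
    (h3s : ContDiff ℝ (⊤ : ℕ∞) A3) (h4s : ContDiff ℝ (⊤ : ℕ∞) A4)
    (h1a : ∀ p : P4, (A1 p)ᴴ = -(A1 p)) (h2a : ∀ p : P4, (A2 p)ᴴ = -(A2 p))
    (h3a : ∀ p : P4, (A3 p)ᴴ = -(A3 p)) (h4a : ∀ p : P4, (A4 p)ᴴ = -(A4 p)) :
    (∀ p : P4,
        curv pd1 pd2 A1 A2 p = -(curv pd3 pd4 A3 A4 p) ∧
        curv pd1 pd3 A1 A3 p = -(curv pd4 pd2 A4 A2 p) ∧
        curv pd1 pd4 A1 A4 p = -(curv pd2 pd3 A2 A3 p)) ↔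
      (∀ μ : ℂ, μ ≠ 0 → ∀ E : P4 → Mat n, ContDiff ℝ (⊤ : ℕ∞) E → ∀ p : P4,
        DOne A1 A2 A3 A4 μ (DTwoEucl A1 A2 A3 A4 μ E) p =
          DTwoEucl A1 A2 A3 A4 μ (DOne A1 A2 A3 A4 μ E) p) :=
  asdym_euclidean_lax_general (WithTop.coe_le_coe.2 le_top) A1 A2 A3 A4
    (h1s.differentiable (by simp)) (h2s.differentiable (by simp))
    (h3s.differentiable (by simp)) (h4s.differentiable (by simp))
end
end

section
/- Let (A,φ) be a connection and Higgs field on ℝ³. Then (A,φ) solves the space-time monopole equation if and only if for every λ ∈ ℂ∖{0} the operators L₁(λ) and L₂(λ) commute, where L₁(λ)F = λ(∂_ξF − A_ξF) − (∂_yF − A_yF) + φF and L₂(λ)F = λ⁻¹(∂_ηF − A_ηF) − (∂_yF − A_yF) − φF, i.e. L₁(λ)(L₂(λ)F) = L₂(λ)(L₁(λ)F) for every smooth map F : ℝ³ → M_n(ℂ). -/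
open Matrix Complex
open scoped Matrix ComplexConjugate

attribute [local instance] Matrix.normedAddCommGroup Matrix.normedSpace

noncomputable section

/-- Space-time `ℝ³` with coordinates `(x, y, t)`. -/
abbrev P3 : Type := ℝ × ℝ × ℝ

section PartialDerivatives

variable {W : Type*} [NormedAddCommGroup W] [NormedSpace ℝ W]

/-- Partial derivative in `x`. -/
def pdx (f : P3 → W) (p : P3) : W := deriv (fun s => f (s, p.2.1, p.2.2)) p.1

/-- Partial derivative in `y`. -/
def pdy (f : P3 → W) (p : P3) : W := deriv (fun s => f (p.1, s, p.2.2)) p.2.1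

/-- Partial derivative in `t`. -/
def pdt (f : P3 → W) (p : P3) : W := deriv (fun s => f (p.1, p.2.1, s)) p.2.2

/-- Light-cone derivative `∂_ξ = ∂_t + ∂_x`. -/
def pdxi (f : P3 → W) (p : P3) : W := pdt f p + pdx f p

/-- Light-cone derivative `∂_η = ∂_t − ∂_x`. -/
def pdeta (f : P3 → W) (p : P3) : W := pdt f p - pdx f p

end PartialDerivatives

/-- `∂_z = ½(∂_x − i ∂_y)`. -/
def pdz {n : ℕ} (f : P3 → Mat n) (p : P3) : Mat n :=
  (2⁻¹ : ℂ) • (pdx f p - Complex.I • pdy f p)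

/-- `∂_z̄ = ½(∂_x + i ∂_y)`. -/
def pdzbar {n : ℕ} (f : P3 → Mat n) (p : P3) : Mat n :=
  (2⁻¹ : ℂ) • (pdx f p + Complex.I • pdy f p)

/-- Commutator `[X, Y] = XY − YX`. -/
def brk {n : ℕ} (X Y : Mat n) : Mat n := X * Y - Y * X

/-- Anti-Hermitian-valued map. -/
def SkewHerm {n : ℕ} (f : P3 → Mat n) : Prop := ∀ p : P3, (f p)ᴴ = -(f p)

/-- The space-time monopole equation `F_{xy} = −∇_tφ`, `F_{xt} = −∇_yφ`, `F_{yt} = ∇_xφ`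
for the connection `(Ax, Ay, At)` and Higgs field `Ph`, at the point `p`. -/
def MonopoleEqAt {n : ℕ} (Ax Ay At Ph : P3 → Mat n) (p : P3) : Prop :=
  (-(pdx Ay p) + pdy Ax p + brk (Ax p) (Ay p) = -(pdt Ph p - brk (At p) (Ph p))) ∧
  (-(pdx At p) + pdt Ax p + brk (Ax p) (At p) = -(pdy Ph p - brk (Ay p) (Ph p))) ∧
  (-(pdy At p) + pdt Ay p + brk (Ay p) (At p) = pdx Ph p - brk (Ax p) (Ph p))

/-- The space-time monopole equation on all of `ℝ³`. -/
def MonopoleEq {n : ℕ} (Ax Ay At Ph : P3 → Mat n) : Prop :=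
  ∀ p : P3, MonopoleEqAt Ax Ay At Ph p

/-- `E` solves the `μ`-linear system for `(A, φ)`. -/
def SolvesMu {n : ℕ} (Ax Ay At Ph : P3 → Mat n) (μ : ℂ) (E : P3 → Mat n) : Prop :=
  ∀ p : P3,
    (2⁻¹ : ℂ) • pdt E p + μ • pdz E p =
      ((2⁻¹ : ℂ) • (At p + Complex.I • Ph p) +
        μ • ((2⁻¹ : ℂ) • (Ax p - Complex.I • Ay p))) * E p ∧
    (2⁻¹ : ℂ) • pdt E p + μ⁻¹ • pdzbar E p =
      ((2⁻¹ : ℂ) • (At p - Complex.I • Ph p) +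
        μ⁻¹ • ((2⁻¹ : ℂ) • (Ax p + Complex.I • Ay p))) * E p

/-- `F` solves the `λ`-linear system for `(A, φ)`. -/
def SolvesLam {n : ℕ} (Ax Ay At Ph : P3 → Mat n) (lm : ℂ) (F : P3 → Mat n) : Prop :=
  ∀ p : P3,
    lm • pdxi F p - pdy F p = (lm • (At p + Ax p) - (Ay p + Ph p)) * F p ∧
    lm⁻¹ • pdeta F p - pdy F p = (lm⁻¹ • (At p - Ax p) - (Ay p - Ph p)) * F p

/-- The operator `L₁(λ) = λ(∂_ξ − A_ξ) − (∂_y − A_y) + φ`. -/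
def LOneOp {n : ℕ} (Ax Ay At Ph : P3 → Mat n) (lm : ℂ) (F : P3 → Mat n) : P3 → Mat n :=
  fun p =>
    lm • (pdxi F p - (At p + Ax p) * F p) - (pdy F p - Ay p * F p) + Ph p * F p

/-- The operator `L₂(λ) = λ⁻¹(∂_η − A_η) − (∂_y − A_y) − φ`. -/
def LTwoOp {n : ℕ} (Ax Ay At Ph : P3 → Mat n) (lm : ℂ) (F : P3 → Mat n) : P3 → Mat n :=
  fun p =>
    lm⁻¹ • (pdeta F p - (At p - Ax p) * F p) - (pdy F p - Ay p * F p) - Ph p * F p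

/-! Put `D_{v,a} = ∂_v − a`. Then `[D_{v,a}, D_{w,b}]` is multiplication by the curvature
`−∂_v b + ∂_w a + [a, b]`, because second derivatives commute. Absorbing `φ` into the potential
of `∂_y` gives `L₁(λ) = λ D_{ξ,A_ξ} − D_{y,A_y+φ}` and `L₂(λ) = λ⁻¹ D_{η,A_η} − D_{y,A_y−φ}`, so
`[L₁(λ), L₂(λ)]` is multiplication by `2(F_{xt} + ∇_yφ) − λ(F_{ξy} + ∇_ξφ) − λ⁻¹(F_{yη} + ∇_ηφ)`.
A Laurent polynomial in `λ` vanishes identically exactly when its coefficients do, and these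
three coefficients span the same equations as the monopole system. -/

theorem forall_sub_smul_sub_inv_smul_eq_zero_iff {K V : Type*} [Field K] [CharZero K]
    [AddCommGroup V] [Module K V] {x y z : V} :
    (∀ c : K, c ≠ 0 → x - c • y - c⁻¹ • z = 0) ↔ x = 0 ∧ y = 0 ∧ z = 0 := by
  refine ⟨fun h => ?_, by rintro ⟨rfl, rfl, rfl⟩; simp⟩
  have at_one := h 1 one_ne_zero
  have at_neg_one := h (-1) (neg_ne_zero.2 one_ne_zero)
  have at_two := h 2 two_ne_zero
  have hx : x = 0 := by
    linear_combination (norm := module) (1 / 2 : K) • at_one + (1 / 2 : K) • at_neg_one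
  have hy : y = 0 := by
    linear_combination (norm := module)
      (1 / 3 : K) • at_one - (2 / 3 : K) • at_two + (1 / 3 : K) • hx
  refine ⟨hx, hy, ?_⟩
  linear_combination (norm := module) hx - hy - at_one

section SecondDerivative

variable {𝕜 E W : Type*} [NontriviallyNormedField 𝕜] [NormedAddCommGroup E] [NormedSpace 𝕜 E]
  [NormedAddCommGroup W] [NormedSpace 𝕜 W] {f : E → W} {p : E}

theorem differentiableAt_fderiv_apply (hf : ContDiffAt 𝕜 2 f p) (w : E) :
    DifferentiableAt 𝕜 (fun q => fderiv 𝕜 f q w) p :=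
  ((hf.fderiv_right (m := 1) le_rfl).differentiableAt one_ne_zero).clm_apply
    (differentiableAt_const w)

theorem fderiv_fderiv_apply_comm (hf : ContDiffAt 𝕜 2 f p) (hsymm : IsSymmSndFDerivAt 𝕜 f p)
    (v w : E) :
    fderiv 𝕜 (fun q => fderiv 𝕜 f q w) p v = fderiv 𝕜 (fun q => fderiv 𝕜 f q v) p w := by
  have hf' : DifferentiableAt 𝕜 (fderiv 𝕜 f) p :=
    (hf.fderiv_right (m := 1) le_rfl).differentiableAt one_ne_zero
  simpa [fderiv_clm_apply hf' (differentiableAt_const _)] using hsymm.eq v w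

end SecondDerivative

section MatrixDerivative

variable {𝕜 E R m l k : Type*} [NontriviallyNormedField 𝕜] [NormedAddCommGroup E]
  [NormedSpace 𝕜 E] [NormedCommRing R] [NormedAlgebra 𝕜 R] {p : E}

theorem fderiv_matrix_apply [Finite l] {f : E → Matrix m l R} (hf : DifferentiableAt 𝕜 f p) (v : E)
    (i : m) (j : l) : fderiv 𝕜 f p v i j = fderiv 𝕜 (fun q => f q i j) p v := by
  have := Fintype.ofFinite l
  have hrow : HasFDerivAt (fun q => f q i) _ p := hasFDerivAt_pi'.1 hf.hasFDerivAt i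
  have hentry : HasFDerivAt (fun q => f q i j) _ p := hasFDerivAt_pi'.1 hrow j
  rw [hentry.fderiv]
  rfl

theorem differentiableAt_matrix [Finite l] {f : E → Matrix m l R} :
    DifferentiableAt 𝕜 f p ↔ ∀ i j, DifferentiableAt 𝕜 (fun q => f q i j) p :=
  have := Fintype.ofFinite l
  differentiableAt_pi.trans (forall_congr' fun _ => differentiableAt_pi)

theorem fderiv_matrix_add_apply [Finite m] [Finite l] {f g : E → Matrix m l R}
    (hf : DifferentiableAt 𝕜 f p) (hg : DifferentiableAt 𝕜 g p) (v : E) :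
    fderiv 𝕜 (f + g) p v = fderiv 𝕜 f p v + fderiv 𝕜 g p v :=
  have := Fintype.ofFinite m
  have := Fintype.ofFinite l
  DFunLike.congr_fun (fderiv_add hf hg) v

theorem fderiv_matrix_sub_apply [Finite m] [Finite l] {f g : E → Matrix m l R}
    (hf : DifferentiableAt 𝕜 f p) (hg : DifferentiableAt 𝕜 g p) (v : E) :
    fderiv 𝕜 (f - g) p v = fderiv 𝕜 f p v - fderiv 𝕜 g p v :=
  have := Fintype.ofFinite m
  have := Fintype.ofFinite l
  DFunLike.congr_fun (fderiv_sub hf hg) v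

theorem differentiableAt_matrix_mul [Fintype l] [Finite k] {f : E → Matrix m l R}
    {g : E → Matrix l k R} (hf : DifferentiableAt 𝕜 f p) (hg : DifferentiableAt 𝕜 g p) :
    DifferentiableAt 𝕜 (fun q => f q * g q) p := by
  rw [differentiableAt_matrix] at *
  intro i j
  simp only [Matrix.mul_apply]
  fun_prop

theorem fderiv_matrix_mul_apply [Fintype l] [Finite k] {f : E → Matrix m l R}
    {g : E → Matrix l k R} (hf : DifferentiableAt 𝕜 f p) (hg : DifferentiableAt 𝕜 g p) (v : E) :
    fderiv 𝕜 (fun q => f q * g q) p v = fderiv 𝕜 f p v * g p + f p * fderiv 𝕜 g p v := by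
  ext i j
  have hfij := differentiableAt_matrix.1 hf
  have hgij := differentiableAt_matrix.1 hg
  rw [fderiv_matrix_apply (differentiableAt_matrix_mul hf hg), Matrix.add_apply]
  simp only [Matrix.mul_apply, fderiv_matrix_apply hf, fderiv_matrix_apply hg]
  rw [fderiv_fun_sum fun s _ => (hfij i s).fun_mul (hgij s j), _root_.sum_apply,
    ← Finset.sum_add_distrib]
  refine Finset.sum_congr rfl fun s _ => ?_
  simp only [fderiv_fun_mul (hfij i s) (hgij s j), _root_.add_apply,
    _root_.smul_apply, smul_eq_mul]
  ring

end MatrixDerivative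

section CovariantDerivative

attribute [local instance] Matrix.isBoundedSMul

variable {𝕜 E R m l : Type*} [NontriviallyNormedField 𝕜] [NormedAddCommGroup E]
  [NormedSpace 𝕜 E] [NormedCommRing R] [NormedAlgebra 𝕜 R] [Fintype m] [Fintype l] {p : E}

variable (𝕜) in
/-- The covariant derivative `∂_v − a` along the constant vector field `v`, where the potential `a`
is the component of the connection in the direction `v`. -/
def covDeriv (v : E) (a : E → Matrix m m R) (F : E → Matrix m l R) (p : E) :
    Matrix m l R :=
  fderiv 𝕜 F p v - a p * F p

variable (𝕜) in
/-- The curvature `−∂_v b + ∂_w a + [a, b]` of the potentials `a` and `b` in the directions `v`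
and `w`, with the sign for which it is the commutator of `∂_v − a` and `∂_w − b`. -/
def curvature (v : E) (a : E → Matrix m m R) (w : E) (b : E → Matrix m m R) (p : E) :
    Matrix m m R :=
  -fderiv 𝕜 b p v + fderiv 𝕜 a p w + (a p * b p - b p * a p)

variable (𝕜) in
/-- The covariant derivative `∂_v φ − [a, φ]` of an endomorphism-valued map `φ`, such as a Higgs
field. -/
def adCovDeriv (v : E) (a φ : E → Matrix m m R) (p : E) : Matrix m m R :=
  fderiv 𝕜 φ p v - (a p * φ p - φ p * a p)

variable (𝕜) in
/-- The combination `c(∂_v − a) − (∂_w − b)` of two covariant derivatives: the shape of both Lax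
operators once the Higgs field is absorbed into the potential `b`. -/
def covDerivPencil (c : R) (v : E) (a : E → Matrix m m R) (w : E)
    (b : E → Matrix m m R) (F : E → Matrix m l R) (p : E) : Matrix m l R :=
  c • covDeriv 𝕜 v a F p - covDeriv 𝕜 w b F p

variable {v w : E} {a b : E → Matrix m m R} {F : E → Matrix m l R}

theorem differentiableAt_covDeriv (ha : DifferentiableAt 𝕜 a p) (hF : ContDiffAt 𝕜 2 F p) :
    DifferentiableAt 𝕜 (covDeriv 𝕜 v a F) p :=
  (differentiableAt_fderiv_apply hF v).sub
    (differentiableAt_matrix_mul ha (hF.differentiableAt two_ne_zero))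

theorem covDeriv_covDeriv (ha : DifferentiableAt 𝕜 a p) (hF : ContDiffAt 𝕜 2 F p) :
    covDeriv 𝕜 w b (covDeriv 𝕜 v a F) p =
      fderiv 𝕜 (fun q => fderiv 𝕜 F q v) p w - (fderiv 𝕜 a p w * F p + a p * fderiv 𝕜 F p w) -
        b p * (fderiv 𝕜 F p v - a p * F p) := by
  have hF' : DifferentiableAt 𝕜 F p := hF.differentiableAt two_ne_zero
  have hderiv : fderiv 𝕜 (covDeriv 𝕜 v a F) p w =
      fderiv 𝕜 (fun q => fderiv 𝕜 F q v) p w - fderiv 𝕜 (fun q => a q * F q) p w :=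
    DFunLike.congr_fun (fderiv_fun_sub (differentiableAt_fderiv_apply hF v)
      (differentiableAt_matrix_mul ha hF')) w
  rw [covDeriv, hderiv, fderiv_matrix_mul_apply ha hF', covDeriv]

theorem covDeriv_commutator (ha : DifferentiableAt 𝕜 a p) (hb : DifferentiableAt 𝕜 b p)
    (hF : ContDiffAt 𝕜 2 F p) (hsymm : IsSymmSndFDerivAt 𝕜 F p) :
    covDeriv 𝕜 v a (covDeriv 𝕜 w b F) p - covDeriv 𝕜 w b (covDeriv 𝕜 v a F) p =
      curvature 𝕜 v a w b p * F p := by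
  have hcomm : fderiv 𝕜 (fun q => fderiv 𝕜 F q w) p v = fderiv 𝕜 (fun q => fderiv 𝕜 F q v) p w :=
    fderiv_fderiv_apply_comm hF hsymm v w
  rw [covDeriv_covDeriv hb hF, covDeriv_covDeriv ha hF, hcomm, curvature]
  simp only [Matrix.mul_sub, Matrix.add_mul, Matrix.sub_mul, Matrix.neg_mul, Matrix.mul_assoc]
  abel

theorem differentiableAt_covDerivPencil (ha : DifferentiableAt 𝕜 a p) (hb : DifferentiableAt 𝕜 b p)
    (hF : ContDiffAt 𝕜 2 F p) {c : R} : DifferentiableAt 𝕜 (covDerivPencil 𝕜 c v a w b F) p :=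
  ((differentiableAt_covDeriv ha hF).const_smul c).sub (differentiableAt_covDeriv hb hF)

theorem covDeriv_covDerivPencil {u : E} {e : E → Matrix m m R} (ha : DifferentiableAt 𝕜 a p)
    (hb : DifferentiableAt 𝕜 b p) (hF : ContDiffAt 𝕜 2 F p) (c : R) :
    covDeriv 𝕜 u e (covDerivPencil 𝕜 c v a w b F) p =
      c • covDeriv 𝕜 u e (covDeriv 𝕜 v a F) p - covDeriv 𝕜 u e (covDeriv 𝕜 w b F) p := by
  have hderiv : fderiv 𝕜 (covDerivPencil 𝕜 c v a w b F) p u =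
      c • fderiv 𝕜 (covDeriv 𝕜 v a F) p u - fderiv 𝕜 (covDeriv 𝕜 w b F) p u :=
    DFunLike.congr_fun (((differentiableAt_covDeriv ha hF).hasFDerivAt.const_smul c).sub
      (differentiableAt_covDeriv hb hF).hasFDerivAt).fderiv u
  rw [covDeriv, hderiv, covDerivPencil, covDeriv.eq_def 𝕜 u, covDeriv.eq_def 𝕜 u, Matrix.mul_sub,
    Matrix.mul_smul]
  module

theorem covDerivPencil_commutator {v₁ v₂ w₁ w₂ : E} {a₁ a₂ b₁ b₂ : E → Matrix m m R}
    (ha₁ : DifferentiableAt 𝕜 a₁ p) (ha₂ : DifferentiableAt 𝕜 a₂ p)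
    (hb₁ : DifferentiableAt 𝕜 b₁ p) (hb₂ : DifferentiableAt 𝕜 b₂ p)
    (hF : ContDiffAt 𝕜 2 F p) (hsymm : IsSymmSndFDerivAt 𝕜 F p) (c d : R) :
    covDerivPencil 𝕜 c v₁ a₁ v₂ a₂ (covDerivPencil 𝕜 d w₁ b₁ w₂ b₂ F) p -
        covDerivPencil 𝕜 d w₁ b₁ w₂ b₂ (covDerivPencil 𝕜 c v₁ a₁ v₂ a₂ F) p =
      ((c * d) • curvature 𝕜 v₁ a₁ w₁ b₁ p - c • curvature 𝕜 v₁ a₁ w₂ b₂ p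
        - d • curvature 𝕜 v₂ a₂ w₁ b₁ p + curvature 𝕜 v₂ a₂ w₂ b₂ p) * F p := by
  have hcomm₁₁ := covDeriv_commutator (v := v₁) (w := w₁) ha₁ hb₁ hF hsymm
  have hcomm₁₂ := covDeriv_commutator (v := v₁) (w := w₂) ha₁ hb₂ hF hsymm
  have hcomm₂₁ := covDeriv_commutator (v := v₂) (w := w₁) ha₂ hb₁ hF hsymm
  have hcomm₂₂ := covDeriv_commutator (v := v₂) (w := w₂) ha₂ hb₂ hF hsymm
  rw [covDerivPencil, covDerivPencil, covDeriv_covDerivPencil hb₁ hb₂ hF,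
    covDeriv_covDerivPencil hb₁ hb₂ hF, covDeriv_covDerivPencil ha₁ ha₂ hF,
    covDeriv_covDerivPencil ha₁ ha₂ hF]
  simp only [Matrix.add_mul, Matrix.sub_mul, Matrix.smul_mul, ← hcomm₁₁, ← hcomm₁₂, ← hcomm₂₁,
    ← hcomm₂₂]
  module

section LightCone

variable {u : E} {c φ : E → Matrix m m R}

theorem curvature_add_add_sub_sub (ha : DifferentiableAt 𝕜 a p) (hb : DifferentiableAt 𝕜 b p) :
    curvature 𝕜 (w + v) (b + a) (w - v) (b - a) p = 2 • curvature 𝕜 v a w b p := by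
  simp only [curvature, fderiv_matrix_add_apply hb ha, fderiv_matrix_sub_apply hb ha, map_add,
    map_sub, Pi.add_apply, Pi.sub_apply, Matrix.add_mul, Matrix.sub_mul, Matrix.mul_add,
    Matrix.mul_sub]
  abel

theorem curvature_self_add_sub (hc : DifferentiableAt 𝕜 c p) (hφ : DifferentiableAt 𝕜 φ p) :
    curvature 𝕜 u (c + φ) u (c - φ) p = 2 • adCovDeriv 𝕜 u c φ p := by
  simp only [curvature, adCovDeriv, fderiv_matrix_add_apply hc hφ, fderiv_matrix_sub_apply hc hφ,
    Pi.add_apply, Pi.sub_apply, Matrix.add_mul, Matrix.sub_mul, Matrix.mul_add, Matrix.mul_sub]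
  abel

theorem curvature_add_add_sub (ha : DifferentiableAt 𝕜 a p) (hb : DifferentiableAt 𝕜 b p)
    (hc : DifferentiableAt 𝕜 c p) (hφ : DifferentiableAt 𝕜 φ p) :
    curvature 𝕜 (w + v) (b + a) u (c - φ) p =
      (curvature 𝕜 v a u c p + adCovDeriv 𝕜 w b φ p) -
        (curvature 𝕜 u c w b p - adCovDeriv 𝕜 v a φ p) := by
  simp only [curvature, adCovDeriv, fderiv_matrix_add_apply hb ha, fderiv_matrix_sub_apply hc hφ,
    map_add, Pi.add_apply, Pi.sub_apply, Matrix.add_mul, Matrix.sub_mul, Matrix.mul_add,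
    Matrix.mul_sub]
  abel

theorem curvature_add_sub_sub (ha : DifferentiableAt 𝕜 a p)
    (hb : DifferentiableAt 𝕜 b p) (hc : DifferentiableAt 𝕜 c p) (hφ : DifferentiableAt 𝕜 φ p) :
    curvature 𝕜 u (c + φ) (w - v) (b - a) p =
      (curvature 𝕜 v a u c p + adCovDeriv 𝕜 w b φ p) +
        (curvature 𝕜 u c w b p - adCovDeriv 𝕜 v a φ p) := by
  simp only [curvature, adCovDeriv, fderiv_matrix_add_apply hc hφ, fderiv_matrix_sub_apply hb ha,
    map_sub, Pi.add_apply, Pi.sub_apply, Matrix.add_mul, Matrix.sub_mul, Matrix.mul_add,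
    Matrix.mul_sub]
  abel

end LightCone

end CovariantDerivative

section PartialDerivatives

variable {W : Type*} [NormedAddCommGroup W] [NormedSpace ℝ W] {f : P3 → W} {p : P3}

theorem pdx_eq_fderiv (hf : DifferentiableAt ℝ f p) : pdx f p = fderiv ℝ f p (1, 0, 0) :=
  (hf.hasFDerivAt.comp_hasDerivAt p.1
    ((hasDerivAt_id _).prodMk (hasDerivAt_const _ (p.2.1, p.2.2)))).deriv

theorem pdy_eq_fderiv (hf : DifferentiableAt ℝ f p) : pdy f p = fderiv ℝ f p (0, 1, 0) :=
  (hf.hasFDerivAt.comp_hasDerivAt p.2.1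
    ((hasDerivAt_const _ p.1).prodMk ((hasDerivAt_id _).prodMk (hasDerivAt_const _ p.2.2)))).deriv

theorem pdt_eq_fderiv (hf : DifferentiableAt ℝ f p) : pdt f p = fderiv ℝ f p (0, 0, 1) :=
  (hf.hasFDerivAt.comp_hasDerivAt p.2.2
    ((hasDerivAt_const _ p.1).prodMk ((hasDerivAt_const _ p.2.1).prodMk (hasDerivAt_id _)))).deriv

theorem pdxi_eq_fderiv (hf : DifferentiableAt ℝ f p) : pdxi f p = fderiv ℝ f p (1, 0, 1) := by
  rw [pdxi, pdt_eq_fderiv hf, pdx_eq_fderiv hf, ← map_add]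
  simp

theorem pdeta_eq_fderiv (hf : DifferentiableAt ℝ f p) : pdeta f p = fderiv ℝ f p (-1, 0, 1) := by
  rw [pdeta, pdt_eq_fderiv hf, pdx_eq_fderiv hf, ← map_sub]
  simp

end PartialDerivatives

section LaxPair

variable {n : ℕ} {Ax Ay At Ph F : P3 → Mat n} {p : P3}

theorem LOneOp_eq_covDerivPencil (hF : DifferentiableAt ℝ F p) (lm : ℂ) :
    LOneOp Ax Ay At Ph lm F p =
      covDerivPencil ℝ lm (1, 0, 1) (At + Ax) (0, 1, 0) (Ay + Ph) F p := by
  have hξ : pdxi F p = fderiv ℝ F p (1, 0, 1) := pdxi_eq_fderiv hF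
  have hy : pdy F p = fderiv ℝ F p (0, 1, 0) := pdy_eq_fderiv hF
  rw [LOneOp, hξ, hy]
  simp only [covDerivPencil, covDeriv, Pi.add_apply, add_mul]
  module

theorem LTwoOp_eq_covDerivPencil (hF : DifferentiableAt ℝ F p) (lm : ℂ) :
    LTwoOp Ax Ay At Ph lm F p =
      covDerivPencil ℝ lm⁻¹ (-1, 0, 1) (At - Ax) (0, 1, 0) (Ay - Ph) F p := by
  have hη : pdeta F p = fderiv ℝ F p (-1, 0, 1) := pdeta_eq_fderiv hF
  have hy : pdy F p = fderiv ℝ F p (0, 1, 0) := pdy_eq_fderiv hF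
  rw [LTwoOp, hη, hy]
  simp only [covDerivPencil, covDeriv, Pi.sub_apply, sub_mul]
  module

theorem monopoleEqAt_iff_curvature (hx : DifferentiableAt ℝ Ax p) (hy : DifferentiableAt ℝ Ay p)
    (ht : DifferentiableAt ℝ At p) (hφ : DifferentiableAt ℝ Ph p) :
    MonopoleEqAt Ax Ay At Ph p ↔
      curvature ℝ (1, 0, 0) Ax (0, 1, 0) Ay p + adCovDeriv ℝ (0, 0, 1) At Ph p = 0 ∧
      curvature ℝ (1, 0, 0) Ax (0, 0, 1) At p + adCovDeriv ℝ (0, 1, 0) Ay Ph p = 0 ∧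
      curvature ℝ (0, 1, 0) Ay (0, 0, 1) At p - adCovDeriv ℝ (1, 0, 0) Ax Ph p = 0 := by
  rw [MonopoleEqAt, pdx_eq_fderiv hy, pdy_eq_fderiv hx, pdt_eq_fderiv hφ, pdx_eq_fderiv ht,
    pdt_eq_fderiv hx, pdy_eq_fderiv hφ, pdy_eq_fderiv ht, pdt_eq_fderiv hy, pdx_eq_fderiv hφ,
    eq_neg_iff_add_eq_zero, eq_neg_iff_add_eq_zero, ← sub_eq_zero (b := _ - brk (Ax p) _)]
  rfl

theorem monopoleEqAt_iff_lightCone_curvature (hx : DifferentiableAt ℝ Ax p)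
    (hy : DifferentiableAt ℝ Ay p) (ht : DifferentiableAt ℝ At p) (hφ : DifferentiableAt ℝ Ph p) :
    MonopoleEqAt Ax Ay At Ph p ↔
      curvature ℝ (1, 0, 1) (At + Ax) (-1, 0, 1) (At - Ax) p +
          curvature ℝ (0, 1, 0) (Ay + Ph) (0, 1, 0) (Ay - Ph) p = 0 ∧
        curvature ℝ (1, 0, 1) (At + Ax) (0, 1, 0) (Ay - Ph) p = 0 ∧
        curvature ℝ (0, 1, 0) (Ay + Ph) (-1, 0, 1) (At - Ax) p = 0 := by
  have hξ : ((1, 0, 1) : P3) = (0, 0, 1) + (1, 0, 0) := by simp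
  have hη : ((-1, 0, 1) : P3) = (0, 0, 1) - (1, 0, 0) := by simp
  rw [monopoleEqAt_iff_curvature hx hy ht hφ, hξ, hη, curvature_add_add_sub_sub hx ht,
    curvature_self_add_sub hy hφ, curvature_add_add_sub hx ht hy hφ,
    curvature_add_sub_sub hx ht hy hφ, ← smul_add]
  constructor
  · rintro ⟨hxy, hxt, hyt⟩
    simp [hxy, hxt, hyt]
  · rintro ⟨htwice, hdiff, hsum⟩
    refine ⟨?_, ?_, ?_⟩
    · linear_combination (norm := module) (1 / 2 : ℂ) • hdiff + (1 / 2 : ℂ) • hsum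
    · linear_combination (norm := module) (1 / 2 : ℂ) • htwice
    · linear_combination (norm := module) (1 / 2 : ℂ) • hsum - (1 / 2 : ℂ) • hdiff

theorem LOneOp_LTwoOp_commutator (hx : Differentiable ℝ Ax) (hy : Differentiable ℝ Ay)
    (ht : Differentiable ℝ At) (hφ : Differentiable ℝ Ph) (hF : ContDiff ℝ 2 F) {lm : ℂ}
    (hlm : lm ≠ 0) :
    LOneOp Ax Ay At Ph lm (LTwoOp Ax Ay At Ph lm F) p -
        LTwoOp Ax Ay At Ph lm (LOneOp Ax Ay At Ph lm F) p =
      (curvature ℝ (1, 0, 1) (At + Ax) (-1, 0, 1) (At - Ax) p +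
          curvature ℝ (0, 1, 0) (Ay + Ph) (0, 1, 0) (Ay - Ph) p
        - lm • curvature ℝ (1, 0, 1) (At + Ax) (0, 1, 0) (Ay - Ph) p
        - lm⁻¹ • curvature ℝ (0, 1, 0) (Ay + Ph) (-1, 0, 1) (At - Ax) p) * F p := by
  have hξ := ht.add hx
  have hη := ht.sub hx
  have hy₁ := hy.add hφ
  have hy₂ := hy.sub hφ
  have hL₁ : LOneOp Ax Ay At Ph lm F = _ :=
    funext fun q => LOneOp_eq_covDerivPencil (hF.differentiable two_ne_zero q) lm
  have hL₂ : LTwoOp Ax Ay At Ph lm F = _ :=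
    funext fun q => LTwoOp_eq_covDerivPencil (hF.differentiable two_ne_zero q) lm
  rw [hL₁, hL₂,
    LOneOp_eq_covDerivPencil (differentiableAt_covDerivPencil (hη p) (hy₂ p) hF.contDiffAt),
    LTwoOp_eq_covDerivPencil (differentiableAt_covDerivPencil (hξ p) (hy₁ p) hF.contDiffAt),
    covDerivPencil_commutator (hξ p) (hy₁ p) (hη p) (hy₂ p) hF.contDiffAt
      (hF.contDiffAt.isSymmSndFDerivAt (by simp)), mul_inv_cancel₀ hlm, one_smul]
  congr 1
  module

theorem monopole_lax_lambda_general (hx : Differentiable ℝ Ax) (hy : Differentiable ℝ Ay)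
    (ht : Differentiable ℝ At) (hφ : Differentiable ℝ Ph) {k : WithTop ℕ∞} (hk : 2 ≤ k) :
    MonopoleEq Ax Ay At Ph ↔
      ∀ lm : ℂ, lm ≠ 0 → ∀ F : P3 → Mat n, ContDiff ℝ k F → ∀ p : P3,
        LOneOp Ax Ay At Ph lm (LTwoOp Ax Ay At Ph lm F) p =
          LTwoOp Ax Ay At Ph lm (LOneOp Ax Ay At Ph lm F) p := by
  have hcomm {lm : ℂ} (hlm : lm ≠ 0) {F : P3 → Mat n} (hF : ContDiff ℝ k F) (p : P3) :=
    LOneOp_LTwoOp_commutator (p := p) hx hy ht hφ (hF.of_le hk) hlm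
  have hmonopole (p : P3) := monopoleEqAt_iff_lightCone_curvature (hx p) (hy p) (ht p) (hφ p)
  constructor
  · intro h lm hlm F hF p
    obtain ⟨hzero, hpos, hneg⟩ := (hmonopole p).1 (h p)
    rw [← sub_eq_zero, hcomm hlm hF, hzero, hpos, hneg]
    simp
  · intro h p
    have hconst : ContDiff ℝ k (fun _ : P3 => (1 : Mat n)) := contDiff_const
    refine (hmonopole p).2 ((forall_sub_smul_sub_inv_smul_eq_zero_iff (K := ℂ)).1 fun lm hlm => ?_)
    simpa [h lm hlm _ hconst p] using (hcomm hlm hconst p).symm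

end LaxPair

/-- `(A, φ)` solves the space-time monopole equation iff for every
`λ ∈ ℂ∖{0}` the operators `L₁(λ)` and `L₂(λ)` commute on all smooth maps `F : ℝ³ → Mₙ(ℂ)`. -/
theorem monopole_lax_lambda {n : ℕ} (Ax Ay At Ph : P3 → Mat n)
    (hxs : ContDiff ℝ (⊤ : ℕ∞) Ax) (hys : ContDiff ℝ (⊤ : ℕ∞) Ay)
    (hts : ContDiff ℝ (⊤ : ℕ∞) At) (hps : ContDiff ℝ (⊤ : ℕ∞) Ph)
    (hxa : SkewHerm Ax) (hya : SkewHerm Ay) (hta : SkewHerm At) (hpa : SkewHerm Ph) :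
    MonopoleEq Ax Ay At Ph ↔
      (∀ lm : ℂ, lm ≠ 0 → ∀ F : P3 → Mat n, ContDiff ℝ (⊤ : ℕ∞) F → ∀ p : P3,
        LOneOp Ax Ay At Ph lm (LTwoOp Ax Ay At Ph lm F) p =
          LTwoOp Ax Ay At Ph lm (LOneOp Ax Ay At Ph lm F) p) := by
  exact monopole_lax_lambda_general (hxs.differentiable (by simp)) (hys.differentiable (by simp))
    (hts.differentiable (by simp)) (hps.differentiable (by simp)) (WithTop.coe_le_coe.2 le_top)
end
end

section
/- Let (A,φ) be a connection and Higgs field on ℝ³ solving the space-time monopole equation such that A_x, A_y, A_t, φ are all independent of t. Suppose g : ℝ³ → GL(n,ℂ) is smooth, independent of t, and satisfies (∂_zg)g⁻¹ = A_z + ½(A_t + iφ) and (∂_z̄g)g⁻¹ = A_z̄ + ½(A_t − iφ). Set α = g⁻¹(A_t + iφ)g and β = g⁻¹(A_t − iφ)g. Then for every μ ∈ ℂ∖{0} the operators ∂_z + ((1−μ⁻¹)/2)α and ∂_z̄ + ((1−μ)/2)β commute on smooth matrix-valued maps; equivalently ((1−μ)/2)∂_zβ − ((1−μ⁻¹)/2)∂_z̄α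 + ((1−μ⁻¹)/2)((1−μ)/2)[α,β] = 0 for all μ ∈ ℂ∖{0} (the Lax pair of a harmonic map). -/
open Matrix Complex
open scoped Matrix ComplexConjugate

attribute [local instance] Matrix.normedAddCommGroup Matrix.normedSpace

noncomputable section

/-!
Stationarity turns the `xt` and `yt` components of the monopole equation into the statement that
`A_t + iφ` and `A_t - iφ` are covariantly constant along `∂_z̄` and `∂_z` respectively. The gauge
`g` removes `A_z` and `A_z̄`, leaving the harmonic map equations `∂_z β = ½[β, α]` and
`∂_z̄ α = ½[α, β]`. The left side of the Lax equation is then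
`¼((1 - μ)(1 - μ⁻¹) - (1 - μ) - (1 - μ⁻¹)) [α, β]`, and its scalar factor vanishes.
-/

section LieAlgebra

variable {R L : Type*} [CommRing R] [LieRing L] [LieAlgebra R L]

theorem lie_add_smul_add_smul_of_mul_self_eq_neg_one {c : R} (hc : c * c = -1)
    {X Y T P Tx Ty Px Py : L}
    (hx : -Tx + ⁅X, T⁆ = -(Py - ⁅Y, P⁆)) (hy : -Ty + ⁅Y, T⁆ = Px - ⁅X, P⁆) :
    ⁅X + c • Y, T + c • P⁆ = (Tx + c • Ty) + c • (Px + c • Py) := by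
  have hTx : Tx = ⁅X, T⁆ + (Py - ⁅Y, P⁆) := by
    rw [← neg_neg (Py - _), ← hx]
    abel
  have hTy : Ty = ⁅Y, T⁆ - (Px - ⁅X, P⁆) := by
    rw [← hy]
    abel
  simp only [hTx, hTy, add_lie, lie_add, smul_lie, lie_smul, smul_add, smul_sub, smul_smul, hc]
  module

theorem lie_sub_add_smul_lie (r : R) (x y z : L) :
    ⁅x, z⁆ - ⁅x + r • y, z⁆ = r • ⁅z, y⁆ := by
  rw [add_lie, smul_lie, ← lie_skew z y]
  module

theorem zero_curvature_of_eq_smul_lie {r a b : R} (hab : b * a = r * (a + b)) {α β dα dβ : L}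
    (hβ : dβ = r • ⁅β, α⁆) (hα : dα = r • ⁅α, β⁆) :
    a • dβ - b • dα + (b * a) • ⁅α, β⁆ = 0 := by
  rw [hβ, hα, hab, ← lie_skew α β]
  module

end LieAlgebra

section RingInverse

open scoped Ring

theorem lie_ringInverse_mul_mul {R : Type*} [Ring R] {a : R} (ha : IsUnit a) (x y : R) :
    ⁅a⁻¹ʳ * x * a, a⁻¹ʳ * y * a⁆ = a⁻¹ʳ * ⁅x, y⁆ * a := by
  simp only [Ring.lie_def, mul_sub, sub_mul, mul_assoc, Ring.mul_inverse_cancel_left _ _ ha]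

variable {𝕜 R : Type*} [NontriviallyNormedField 𝕜] [NormedRing R] [NormedAlgebra 𝕜 R]
  [HasSummableGeomSeries R] {a m : 𝕜 → R} {a' m' : R} {s : 𝕜}

theorem hasDerivAt_ringInverse_comp (ha : HasDerivAt a a' s) (hs : IsUnit (a s)) :
    HasDerivAt (fun t => (a t)⁻¹ʳ) (-((a s)⁻¹ʳ * a' * (a s)⁻¹ʳ)) s := by
  obtain ⟨u, hu⟩ := hs
  have hinv : HasFDerivAt Ring.inverse (-ContinuousLinearMap.mulLeftRight 𝕜 R ↑u⁻¹ ↑u⁻¹) (a s) :=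
    hu ▸ hasFDerivAt_ringInverse u
  simpa [← hu, Function.comp_def] using hinv.comp_hasDerivAt s ha

theorem hasDerivAt_ringInverse_mul_mul (ha : HasDerivAt a a' s) (hm : HasDerivAt m m' s)
    (hs : IsUnit (a s)) :
    HasDerivAt (fun t => (a t)⁻¹ʳ * m t * a t)
      ((a s)⁻¹ʳ * (m' - ⁅a' * (a s)⁻¹ʳ, m s⁆) * a s) s := by
  convert ((hasDerivAt_ringInverse_comp ha hs).fun_mul hm).fun_mul ha using 1
  simp only [Ring.lie_def, mul_sub, sub_mul, add_mul, neg_mul, mul_assoc,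
    Ring.inverse_mul_cancel _ hs, mul_one]
  abel

end RingInverse

attribute [local instance] LieRing.ofAssociativeRing

theorem hasDerivAt_matrix_inv_mul_mul {n : ℕ} {a m : ℝ → Mat n} {a' m' : Mat n} {s : ℝ}
    (ha : HasDerivAt a a' s) (hm : HasDerivAt m m' s) (hs : IsUnit (a s)) :
    HasDerivAt (fun t => (a t)⁻¹ * m t * a t)
      ((a s)⁻¹ * (m' - ⁅a' * (a s)⁻¹, m s⁆) * a s) s := by
  simp only [nonsing_inv_eq_ringInverse]
  -- `HasDerivAt` only sees the topology, so the sup norm may be traded for a submultiplicative one.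
  let normedRing : NormedRing (Mat n) := Matrix.linftyOpNormedRing
  let : NormedAlgebra ℝ (Mat n) := Matrix.linftyOpNormedAlgebra
  have : @CompleteSpace (Mat n) normedRing.toMetricSpace.toUniformSpace :=
    FiniteDimensional.complete ℝ (Mat n)
  exact hasDerivAt_ringInverse_mul_mul ha hm hs

section PartialDerivatives

variable {W : Type*} [NormedAddCommGroup W] [NormedSpace ℝ W] {f : P3 → W} {p : P3}

theorem hasDerivAt_pdx (hf : DifferentiableAt ℝ f p) :
    HasDerivAt (fun s => f (s, p.2.1, p.2.2)) (pdx f p) p.1 :=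
  (DifferentiableAt.comp (g := f) p.1 hf (by fun_prop)).hasDerivAt

theorem hasDerivAt_pdy (hf : DifferentiableAt ℝ f p) :
    HasDerivAt (fun s => f (p.1, s, p.2.2)) (pdy f p) p.2.1 :=
  (DifferentiableAt.comp (g := f) p.2.1 hf (by fun_prop)).hasDerivAt

theorem pdt_eq_zero_of_stationary (hf : ∀ t, f (p.1, p.2.1, t) = f p) : pdt f p = 0 := by
  simp only [pdt, hf, deriv_const]

end PartialDerivatives

/-- The operator `½(∂_x + c ∂_y)` on matrix-valued maps, treating `∂_z̄` (`c = i`) and `∂_z`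
(`c = -i`) uniformly. -/
def wirtinger {n : ℕ} (c : ℂ) (f : P3 → Mat n) (p : P3) : Mat n :=
  (2⁻¹ : ℂ) • (pdx f p + c • pdy f p)

section Wirtinger

variable {n : ℕ} {c : ℂ} {f g m : P3 → Mat n} {p : P3}

theorem pdzbar_eq_wirtinger (f : P3 → Mat n) (p : P3) : pdzbar f p = wirtinger I f p := rfl

theorem pdz_eq_wirtinger (f : P3 → Mat n) (p : P3) : pdz f p = wirtinger (-I) f p := by
  rw [pdz, wirtinger, neg_smul, sub_eq_add_neg]

theorem wirtinger_add_smul (hf : DifferentiableAt ℝ f p) (hm : DifferentiableAt ℝ m p) (b : ℂ) :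
    wirtinger c (fun q => f q + b • m q) p = wirtinger c f p + b • wirtinger c m p := by
  have hx : pdx (fun q => f q + b • m q) p = pdx f p + b • pdx m p :=
    ((hasDerivAt_pdx hf).add ((hasDerivAt_pdx hm).const_smul b)).deriv
  have hy : pdy (fun q => f q + b • m q) p = pdy f p + b • pdy m p :=
    ((hasDerivAt_pdy hf).add ((hasDerivAt_pdy hm).const_smul b)).deriv
  simp only [wirtinger, hx, hy]
  module

theorem wirtinger_inv_mul_mul (hg : DifferentiableAt ℝ g p) (hm : DifferentiableAt ℝ m p)
    (hu : IsUnit (g p)) :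
    wirtinger c (fun q => (g q)⁻¹ * m q * g q) p =
      (g p)⁻¹ * (wirtinger c m p - ⁅wirtinger c g p * (g p)⁻¹, m p⁆) * g p := by
  have hx : pdx (fun q => (g q)⁻¹ * m q * g q) p =
      (g p)⁻¹ * (pdx m p - ⁅pdx g p * (g p)⁻¹, m p⁆) * g p :=
    (hasDerivAt_matrix_inv_mul_mul (hasDerivAt_pdx hg) (hasDerivAt_pdx hm) hu).deriv
  have hy : pdy (fun q => (g q)⁻¹ * m q * g q) p =
      (g p)⁻¹ * (pdy m p - ⁅pdy g p * (g p)⁻¹, m p⁆) * g p :=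
    (hasDerivAt_matrix_inv_mul_mul (hasDerivAt_pdy hg) (hasDerivAt_pdy hm) hu).deriv
  simp only [wirtinger, hx, hy, Ring.lie_def, smul_mul_assoc, add_mul, mul_add, mul_sub,
    sub_mul, mul_smul_comm]
  module

theorem wirtinger_inv_mul_mul_eq_lie {B k : Mat n} (hg : DifferentiableAt ℝ g p)
    (hm : DifferentiableAt ℝ m p) (hu : IsUnit (g p)) (hmB : wirtinger c m p = ⁅B, m p⁆)
    (hgB : wirtinger c g p * (g p)⁻¹ = B + (2⁻¹ : ℂ) • k) :
    wirtinger c (fun q => (g q)⁻¹ * m q * g q) p =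
      (2⁻¹ : ℂ) • ⁅(g p)⁻¹ * m p * g p, (g p)⁻¹ * k * g p⁆ := by
  have hcov : ⁅B, m p⁆ - ⁅B + (2⁻¹ : ℂ) • k, m p⁆ = (2⁻¹ : ℂ) • ⁅m p, k⁆ :=
    lie_sub_add_smul_lie _ B k (m p)
  rw [wirtinger_inv_mul_mul hg hm hu, hmB, hgB, hcov, nonsing_inv_eq_ringInverse,
    lie_ringInverse_mul_mul hu, mul_smul_comm, smul_mul_assoc]

end Wirtinger

theorem wirtinger_add_smul_higgs_eq_lie {n : ℕ} {Ax Ay At Ph : P3 → Mat n} {p : P3} {c : ℂ}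
    (hc : c * c = -1) (hAt : DifferentiableAt ℝ At p) (hPh : DifferentiableAt ℝ Ph p)
    (hx : -(pdx At p) + brk (Ax p) (At p) = -(pdy Ph p - brk (Ay p) (Ph p)))
    (hy : -(pdy At p) + brk (Ay p) (At p) = pdx Ph p - brk (Ax p) (Ph p)) :
    wirtinger c (fun q => At q + c • Ph q) p =
      ⁅(2⁻¹ : ℂ) • (Ax p + c • Ay p), At p + c • Ph p⁆ := by
  have hlie : ⁅Ax p + c • Ay p, At p + c • Ph p⁆ =
      (pdx At p + c • pdy At p) + c • (pdx Ph p + c • pdy Ph p) :=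
    lie_add_smul_add_smul_of_mul_self_eq_neg_one hc hx hy
  calc
    wirtinger c (fun q => At q + c • Ph q) p
    _ = (2⁻¹ : ℂ) • ⁅Ax p + c • Ay p, At p + c • Ph p⁆ := by
      rw [wirtinger_add_smul hAt hPh, hlie, wirtinger, wirtinger]
      module
    _ = ⁅(2⁻¹ : ℂ) • (Ax p + c • Ay p), At p + c • Ph p⁆ := (smul_lie (L := Mat n) _ _ _).symm

theorem wirtinger_inv_mul_add_smul_higgs_mul {n : ℕ} {Ax Ay At Ph g : P3 → Mat n} {p : P3} {c : ℂ}
    (hc : c * c = -1) (hAt : DifferentiableAt ℝ At p) (hPh : DifferentiableAt ℝ Ph p)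
    (hg : DifferentiableAt ℝ g p) (hu : IsUnit (g p))
    (hx : -(pdx At p) + brk (Ax p) (At p) = -(pdy Ph p - brk (Ay p) (Ph p)))
    (hy : -(pdy At p) + brk (Ay p) (At p) = pdx Ph p - brk (Ax p) (Ph p))
    (hgc : wirtinger c g p * (g p)⁻¹ =
      (2⁻¹ : ℂ) • (Ax p + c • Ay p) + (2⁻¹ : ℂ) • (At p - c • Ph p)) :
    wirtinger c (fun q => (g q)⁻¹ * (At q + c • Ph q) * g q) p =
      (2⁻¹ : ℂ) • ⁅(g p)⁻¹ * (At p + c • Ph p) * g p, (g p)⁻¹ * (At p - c • Ph p) * g p⁆ :=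
  wirtinger_inv_mul_mul_eq_lie hg (hAt.fun_add (hPh.fun_const_smul c)) hu
    (wirtinger_add_smul_higgs_eq_lie hc hAt hPh hx hy) hgc

theorem stationary_monopole_harmonic_lax_general {n : ℕ} {Ax Ay At Ph g : P3 → Mat n} {p : P3}
    (hAt : DifferentiableAt ℝ At p) (hPh : DifferentiableAt ℝ Ph p)
    (hg : DifferentiableAt ℝ g p) (hu : IsUnit (g p))
    (hAxt : ∀ t, Ax (p.1, p.2.1, t) = Ax p) (hAyt : ∀ t, Ay (p.1, p.2.1, t) = Ay p)
    (hFxt : -(pdx At p) + pdt Ax p + brk (Ax p) (At p) = -(pdy Ph p - brk (Ay p) (Ph p)))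
    (hFyt : -(pdy At p) + pdt Ay p + brk (Ay p) (At p) = pdx Ph p - brk (Ax p) (Ph p))
    (hgz : pdz g p * (g p)⁻¹ =
      (2⁻¹ : ℂ) • (Ax p - I • Ay p) + (2⁻¹ : ℂ) • (At p + I • Ph p))
    (hgzbar : pdzbar g p * (g p)⁻¹ =
      (2⁻¹ : ℂ) • (Ax p + I • Ay p) + (2⁻¹ : ℂ) • (At p - I • Ph p))
    {μ : ℂ} (hμ : μ ≠ 0) :
    ((1 - μ) / 2) • pdz (fun q => (g q)⁻¹ * (At q - I • Ph q) * g q) p -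
      ((1 - μ⁻¹) / 2) • pdzbar (fun q => (g q)⁻¹ * (At q + I • Ph q) * g q) p +
      (((1 - μ⁻¹) / 2) * ((1 - μ) / 2)) •
        brk ((g p)⁻¹ * (At p + I • Ph p) * g p) ((g p)⁻¹ * (At p - I • Ph p) * g p) = 0 := by
  rw [pdt_eq_zero_of_stationary hAxt, add_zero] at hFxt
  rw [pdt_eq_zero_of_stationary hAyt, add_zero] at hFyt
  have hα : pdzbar (fun q => (g q)⁻¹ * (At q + I • Ph q) * g q) p =
      (2⁻¹ : ℂ) • ⁅(g p)⁻¹ * (At p + I • Ph p) * g p, (g p)⁻¹ * (At p - I • Ph p) * g p⁆ := by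
    rw [pdzbar_eq_wirtinger] at hgzbar ⊢
    exact wirtinger_inv_mul_add_smul_higgs_mul I_mul_I hAt hPh hg hu hFxt hFyt hgzbar
  have hβ : pdz (fun q => (g q)⁻¹ * (At q - I • Ph q) * g q) p =
      (2⁻¹ : ℂ) • ⁅(g p)⁻¹ * (At p - I • Ph p) * g p, (g p)⁻¹ * (At p + I • Ph p) * g p⁆ := by
    rw [pdz_eq_wirtinger] at hgz ⊢
    have hneg : -I * -I = -1 := by rw [neg_mul_neg, I_mul_I]
    simpa only [neg_smul, sub_neg_eq_add, ← sub_eq_add_neg] using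
      wirtinger_inv_mul_add_smul_higgs_mul hneg hAt hPh hg hu hFxt hFyt
        (by simpa only [neg_smul, sub_neg_eq_add, ← sub_eq_add_neg] using hgz)
  have hscalar : ((1 - μ⁻¹) / 2) * ((1 - μ) / 2) = 2⁻¹ * ((1 - μ) / 2 + (1 - μ⁻¹) / 2) := by
    field_simp
    ring
  exact zero_curvature_of_eq_smul_lie hscalar hβ hα

/-- A time-independent solution of the space-time monopole equation,
after fixing the gauge at `μ = 1` by `g`, yields the Lax pair of a harmonic map: with
`α = g⁻¹(A_t + iφ)g` and `β = g⁻¹(A_t − iφ)g`, for every `μ ∈ ℂ∖{0}` one has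
`((1−μ)/2)∂_zβ − ((1−μ⁻¹)/2)∂_z̄α + ((1−μ⁻¹)/2)((1−μ)/2)[α,β] = 0`. -/
theorem stationary_monopole_harmonic_lax {n : ℕ} (Ax Ay At Ph : P3 → Mat n)
    (hxs : ContDiff ℝ (⊤ : ℕ∞) Ax) (hys : ContDiff ℝ (⊤ : ℕ∞) Ay)
    (hts : ContDiff ℝ (⊤ : ℕ∞) At) (hps : ContDiff ℝ (⊤ : ℕ∞) Ph)
    (hxa : SkewHerm Ax) (hya : SkewHerm Ay) (hta : SkewHerm At) (hpa : SkewHerm Ph)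
    (hmono : MonopoleEq Ax Ay At Ph)
    (hAxt : ∀ x y t t' : ℝ, Ax (x, y, t) = Ax (x, y, t'))
    (hAyt : ∀ x y t t' : ℝ, Ay (x, y, t) = Ay (x, y, t'))
    (hAtt : ∀ x y t t' : ℝ, At (x, y, t) = At (x, y, t'))
    (hPht : ∀ x y t t' : ℝ, Ph (x, y, t) = Ph (x, y, t'))
    (g : P3 → Mat n) (hgs : ContDiff ℝ (⊤ : ℕ∞) g) (hgl : ∀ p : P3, IsUnit (g p))
    (hgt : ∀ x y t t' : ℝ, g (x, y, t) = g (x, y, t'))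
    (hgz : ∀ p : P3, pdz g p * (g p)⁻¹ =
      (2⁻¹ : ℂ) • (Ax p - Complex.I • Ay p) + (2⁻¹ : ℂ) • (At p + Complex.I • Ph p))
    (hgzbar : ∀ p : P3, pdzbar g p * (g p)⁻¹ =
      (2⁻¹ : ℂ) • (Ax p + Complex.I • Ay p) + (2⁻¹ : ℂ) • (At p - Complex.I • Ph p)) :
    ∀ μ : ℂ, μ ≠ 0 → ∀ p : P3,
      ((1 - μ) / 2) • pdz (fun q => (g q)⁻¹ * (At q - Complex.I • Ph q) * g q) p -
        ((1 - μ⁻¹) / 2) • pdzbar (fun q => (g q)⁻¹ * (At q + Complex.I • Ph q) * g q) p +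
        (((1 - μ⁻¹) / 2) * ((1 - μ) / 2)) •
          brk ((g p)⁻¹ * (At p + Complex.I • Ph p) * g p)
            ((g p)⁻¹ * (At p - Complex.I • Ph p) * g p) = 0 := by
  intro μ hμ p
  exact stationary_monopole_harmonic_lax_general (hts.differentiable (by simp) p)
    (hps.differentiable (by simp) p) (hgs.differentiable (by simp) p) (hgl p)
    (fun t => hAxt _ _ t _) (fun t => hAyt _ _ t _) (hmono p).2.1 (hmono p).2.2
    (hgz p) (hgzbar p) hμ
end
end
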